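/- If C is a k × n real matrix of rank k all of whose k × k minors (with columns in increasing order) are nonnegative, and Z is an n × (k+m) real matrix all of whose (k+m) × (k+m) minors are positive (n ≥ k+m), then the k × (k+m) matrix Y = C·Z has rank k. -/

import Mathlib

/-!
The proof compares numbers of sign changes, following Gantmakher and Krein. If `Y = C * Z` had
dependent rows, a nonzero vector `v` in the row space of `C` would satisfy `v Z = 0`.

* Positivity of the maximal minors of `Z` forces `v` to alternate in sign along `k + m + 1` positions
  (`alternating_of_vecMul_eq_zero`), by merging neighbouring entries of equal sign.
* Nonnegativity of the maximal minors of `C` forbids alternation of `v` along even `k + 1` positions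
  (`not_alternating_of_minors_nonneg`). When all minors are positive this is a Laplace expansion; in
  general `C` is perturbed by small column operations between neighbouring columns, which preserve
  nonnegativity and enlarge the set of positive minors until it is everything.
-/

/-- Strict sign alternation passes to a vector having the same sign on the support. -/
theorem mul_neg_of_same_sign {ι κ : Type*} {v : ι → ℝ} {w : κ → ℝ} {ρ : ι → κ}
    (h : ∀ j, v j ≠ 0 → 0 < v j * w (ρ j)) {a b : ι} (hab : v a * v b < 0) :
    w (ρ a) * w (ρ b) < 0 := by
  have ha := h a (left_ne_zero_of_mul hab.ne)
  have hb := h b (right_ne_zero_of_mul hab.ne)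
  have hp := mul_pos ha hb
  rw [mul_mul_mul_comm] at hp
  exact neg_of_mul_pos_right hp hab.le

/-- A nonzero vector orthogonal to the columns of a matrix with `d` columns and positive maximal
minors has at least `d` sign changes. The induction merges two neighbouring entries that do not have
strictly opposite signs; it stops when all entries alternate or when `Z` is square, hence
invertible. -/
theorem alternating_of_vecMul_eq_zero (d n : ℕ) (hn : d ≤ n)
    (Z : Matrix (Fin n) (Fin d) ℝ)
    (hZ : ∀ f : Fin d → Fin n, StrictMono f → 0 < (Z.submatrix f id).det)
    (v : Fin n → ℝ) (hv : v ≠ 0) (hvZ : Matrix.vecMul v Z = 0) :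
    ∃ I : Fin (d + 1) → Fin n, StrictMono I ∧
      ∀ a : Fin d, v (I a.castSucc) * v (I a.succ) < 0 := by
  induction n, hn using Nat.le_induction with
  | base =>
    have h := hZ id strictMono_id
    rw [Matrix.submatrix_id_id] at h
    exact absurd (Matrix.exists_vecMul_eq_zero_iff.1 ⟨v, hv, hvZ⟩) h.ne'
  | succ n hn ih =>
    by_cases hall : ∀ i : Fin n, v i.castSucc * v i.succ < 0
    · exact ⟨Fin.castLE (by omega), Fin.strictMono_castLE _,
        fun a => hall (Fin.castLE hn a)⟩
    push Not at hall
    obtain ⟨i, hi⟩ := hall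
    -- Entries `i` and `i + 1` have weakly equal signs: they are merged into one. Deleting position
    -- `i + 1` or position `i` gives two increasing embeddings, called `σ` and `τ` below, which
    -- differ only at `i`.
    have hsm : StrictMono (i.succ.succAbove) := Fin.strictMono_succAbove _
    have htm : StrictMono (i.castSucc.succAbove) := Fin.strictMono_succAbove _
    have hsi : i.succ.succAbove i = i.castSucc := by simp
    have hti : i.castSucc.succAbove i = i.succ := by simp
    have hst : ∀ j, j ≠ i → i.castSucc.succAbove j = i.succ.succAbove j := by
      intro j hj
      simp only [Fin.succAbove, Fin.lt_def, Fin.ext_iff] at *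
      grind
    have hsum (F : Fin (n + 1) → ℝ) : ∑ j, F j = F i.succ + ∑ j, F (i.succ.succAbove j) :=
      Fin.sum_univ_succAbove F i.succ
    have hσr (j : Fin (n + 1)) (hj : j ≠ i.succ) : ∃ l, i.succ.succAbove l = j :=
      Fin.exists_succAbove_eq hj
    generalize i.succ.succAbove = σ at *
    generalize i.castSucc.succAbove = τ at *
    -- `s` is the merged entry; the two merged rows of `Z` get weights `α`, `β` with `(v i, v (i+1))
    -- = s (α, β)`, so that the relation `v Z = 0` survives.
    obtain ⟨s, α, β, hα, hβ, hαβ, hαs, hβs⟩ : ∃ s α β : ℝ, 0 ≤ α ∧ 0 ≤ β ∧ α + β = 1 ∧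
        α * s = v i.castSucc ∧ β * s = v i.succ := by
      set x := v i.castSucc
      set y := v i.succ
      by_cases h0 : x + y = 0
      · have : x = 0 ∧ y = 0 := by constructor <;> nlinarith [sq_nonneg x, sq_nonneg y]
        exact ⟨0, 1, 0, by simp, by simp, by simp, by simp [this.1], by simp [this.2]⟩
      · have hp : 0 < (x + y) * (x + y) := mul_self_pos.2 h0
        refine ⟨x + y, x / (x + y), y / (x + y), ?_, ?_, ?_, ?_, ?_⟩
        · rw [← mul_div_mul_right _ _ h0]
          exact div_nonneg (by nlinarith [sq_nonneg x]) hp.le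
        · rw [← mul_div_mul_right _ _ h0]
          exact div_nonneg (by nlinarith [sq_nonneg y]) hp.le
        all_goals field_simp
    let Zm : Matrix (Fin n) (Fin d) ℝ :=
      (Z.submatrix σ id).updateRow i (α • Z i.castSucc + β • Z i.succ)
    let vm : Fin n → ℝ := Function.update (v ∘ σ) i s
    have hvmi : vm i = s := by simp [vm]
    have hvmj (j : Fin n) (hj : j ≠ i) : vm j = v (σ j) := by simp [vm, hj]
    -- A minor of `Zm` using row `i` is, by linearity in that row, a convex combination of two minors
    -- of `Z`; any other minor of `Zm` is a minor of `Z`.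
    have hZmpos (f : Fin d → Fin n) (hf : StrictMono f) : 0 < (Zm.submatrix f id).det := by
      by_cases hif : ∃ a, f a = i
      · obtain ⟨a, rfl⟩ := hif
        have e : Zm.submatrix f id = ((Z.submatrix (σ ∘ f) id).updateRow a
            (α • Z (f a).castSucc + β • Z (f a).succ)) := by
          ext b c
          by_cases hb : b = a
          · subst hb; simp [Zm]
          · simp [Zm, Matrix.updateRow_apply, hb, hf.injective.eq_iff]
        have e1 : (Z.submatrix (σ ∘ f) id).updateRow a (Z (f a).castSucc) =
            Z.submatrix (σ ∘ f) id := by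
          ext b c
          by_cases hb : b = a
          · subst hb; simp [hsi]
          · simp [Matrix.updateRow_apply, hb]
        have e2 : (Z.submatrix (σ ∘ f) id).updateRow a (Z (f a).succ) =
            Z.submatrix (τ ∘ f) id := by
          ext b c
          by_cases hb : b = a
          · subst hb; simp [hti]
          · simp [Matrix.updateRow_apply, hb, hst (f b) (hf.injective.ne hb)]
        rw [e, Matrix.det_updateRow_add, Matrix.det_updateRow_smul, Matrix.det_updateRow_smul,
          e1, e2]
        have p1 := hZ _ (hsm.comp hf)
        have p2 := hZ _ (htm.comp hf)
        rcases hα.eq_or_lt with h | h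
        · have : β = 1 := by linarith
          simp only [this, ← h]; linarith
        · have := mul_pos h p1
          have := mul_nonneg hβ p2.le
          linarith
      · push Not at hif
        have e : Zm.submatrix f id = Z.submatrix (σ ∘ f) id := by
          ext b c
          simp [Zm, Matrix.updateRow_apply, hif]
        rw [e]; exact hZ _ (hsm.comp hf)
    have hvm0 : vm ≠ 0 := by
      intro h0
      have hs : s = 0 := by rw [← hvmi, h0]; rfl
      apply hv
      funext j
      by_cases hj : j = i.succ
      · rw [hj, ← hβs, hs]; simp
      · obtain ⟨l, rfl⟩ := hσr j hj
        by_cases hl : l = i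
        · rw [hl, hsi, ← hαs, hs]; simp
        · rw [← hvmj l hl, h0]; rfl
    have hvZm : Matrix.vecMul vm Zm = 0 := by
      funext c
      have h := congrFun hvZ c
      simp only [Matrix.vecMul, dotProduct, Pi.zero_apply] at h ⊢
      rw [hsum, ← Finset.add_sum_erase _ _ (Finset.mem_univ i)] at h
      rw [← Finset.add_sum_erase _ _ (Finset.mem_univ i), ← h, hvmi, hsi, ← hαs, ← hβs]
      have : ∑ x ∈ Finset.univ.erase i, vm x * Zm x c =
          ∑ x ∈ Finset.univ.erase i, v (σ x) * Z (σ x) c := by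
        refine Finset.sum_congr rfl fun x hx => ?_
        have hx := Finset.ne_of_mem_erase hx
        simp [hvmj x hx, Zm, hx]
      rw [this]
      simp [Zm]
      ring
    obtain ⟨I, hI, hIv⟩ := ih Zm hZmpos vm hvm0 hvZm
    -- lift back along whichever embedding hits an entry of positive weight at `i`
    obtain ⟨ρ, hρ, hρv⟩ : ∃ ρ : Fin n → Fin (n + 1), StrictMono ρ ∧
        ∀ j, vm j ≠ 0 → 0 < vm j * v (ρ j) := by
      rcases hα.eq_or_lt with h | h
      · refine ⟨τ, htm, fun j hj => ?_⟩
        by_cases hji : j = i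
        · subst hji
          have hβ1 : β = 1 := by linarith
          rw [hti, ← hβs, hvmi, hβ1, one_mul]
          exact mul_self_pos.2 (hvmi ▸ hj)
        · rw [hst j hji, ← hvmj j hji]
          exact mul_self_pos.2 hj
      · refine ⟨σ, hsm, fun j hj => ?_⟩
        by_cases hji : j = i
        · subst hji
          rw [hsi, ← hαs, hvmi, mul_left_comm]
          exact mul_pos h (mul_self_pos.2 (hvmi ▸ hj))
        · rw [← hvmj j hji]
          exact mul_self_pos.2 hj
    exact ⟨ρ ∘ I, hρ.comp hI, fun a => mul_neg_of_same_sign hρv (hIv a)⟩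

/-- A set of increasing sequences stable under moving one entry by `±1` is everything as soon as it is
nonempty. -/
theorem forall_strictMono_of_adjacent_moves {k n : ℕ} (S : (Fin k → Fin n) → Prop)
    (hS : ∀ g : Fin k → Fin n, StrictMono g → S g → ∀ (a : Fin k) (j : Fin n),
      ((j : ℕ) = g a + 1 ∨ (g a : ℕ) = j + 1) → StrictMono (Function.update g a j) →
      S (Function.update g a j))
    (g h : Fin k → Fin n) (hg : StrictMono g) (hh : StrictMono h) (hSg : S g) : S h := by
  induction hN : ∑ a, ((g a : ℤ) - h a).natAbs using Nat.strong_induction_on generalizing g with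
  | _ N ih =>
  subst hN
  have step (a : Fin k) (j : Fin n) (hj : (j : ℕ) = g a + 1 ∨ (g a : ℕ) = j + 1)
      (hsm : StrictMono (Function.update g a j))
      (hlt : ((j : ℤ) - h a).natAbs < ((g a : ℤ) - h a).natAbs) : S h := by
    refine ih _ ?_ _ hsm (hS g hg hSg a j hj hsm) rfl
    refine Finset.sum_lt_sum (fun b _ => ?_) ⟨a, Finset.mem_univ _, by simpa using hlt⟩
    by_cases hb : b = a
    · subst hb; simpa using hlt.le
    · simp [hb]
  -- The largest index at which `g` is too small can be increased, as `g (a + 1) ≥ h (a + 1) > h a`.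
  by_cases h1 : ∃ a, g a < h a
  · obtain ⟨a, ha, hmax⟩ := (Set.toFinite {a | g a < h a}).exists_maximal h1
    have ha : g a < h a := ha
    have hmax' (b) (hb : a < b) : h b ≤ g b := by
      by_contra hc
      exact absurd (hmax (not_le.1 hc) hb.le) (not_le.2 hb)
    refine step a ⟨g a + 1, by omega⟩ (Or.inl rfl) ?_ ?_
    · intro b c hbc
      by_cases hb : b = a
      · subst hb
        have := hmax' c hbc
        have := hh hbc
        simp only [Function.update_self, Function.update_of_ne hbc.ne', Fin.lt_def,
          Fin.le_def] at *
        omega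
      · by_cases hc : c = a
        · subst hc
          have := hg hbc
          simp only [Function.update_self, Function.update_of_ne hb, Fin.lt_def] at *
          omega
        · simpa [hb, hc] using hg hbc
    · simp only [Fin.lt_def] at ha
      push_cast
      omega
  -- Symmetrically, the smallest index at which `g` is too large can be decreased.
  by_cases h2 : ∃ a, h a < g a
  · obtain ⟨a, ha, hmin⟩ := (Set.toFinite {a | h a < g a}).exists_minimal h2
    have ha : h a < g a := ha
    have hmin' (b) (hb : b < a) : g b ≤ h b := by
      by_contra hc
      exact absurd (hmin (not_le.1 hc) hb.le) (not_le.2 hb)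
    have ha' : (h a : ℕ) < g a := ha
    refine step a ⟨g a - 1, by omega⟩ (Or.inr (by simp only; omega)) ?_ ?_
    · intro b c hbc
      by_cases hb : b = a
      · subst hb
        have := hg hbc
        simp only [Function.update_self, Function.update_of_ne hbc.ne', Fin.lt_def] at *
        omega
      · by_cases hc : c = a
        · subst hc
          have := hmin' b hbc
          have := hh hbc
          simp only [Function.update_self, Function.update_of_ne hb, Fin.lt_def,
            Fin.le_def] at *
          omega
        · simpa [hb, hc] using hg hbc
    · simp only
      omega
  push Not at h1 h2
  have : g = h := funext fun a => le_antisymm (h2 a) (h1 a)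
  exact this ▸ hSg

/-- If all maximal minors of a `k`-row matrix are positive, no vector of its row space alternates in
sign along `k + 1` positions: stacking such a vector `v` on top of `C` at these positions gives a
singular matrix, but all terms of its Laplace expansion along `v` have the same sign. -/
theorem not_alternating_of_minors_pos {k n : ℕ} (hk : k ≠ 0)
    (C : Matrix (Fin k) (Fin n) ℝ) (c : Fin k → ℝ)
    (I : Fin (k + 1) → Fin n) (hI : StrictMono I)
    (hv : ∀ a : Fin k, Matrix.vecMul c C (I a.castSucc) * Matrix.vecMul c C (I a.succ) < 0)
    (hC : ∀ g : Fin k → Fin n, StrictMono g → 0 < (C.submatrix id g).det) : False := by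
  set v := Matrix.vecMul c C with hvdef
  let M : Matrix (Fin (k + 1)) (Fin (k + 1)) ℝ :=
    Matrix.of (Fin.cons (v ∘ I) fun r => C r ∘ I)
  have hM : M.det = 0 := by
    refine Matrix.exists_vecMul_eq_zero_iff.1 ⟨Fin.cons 1 (-c), fun h => ?_, ?_⟩
    · simpa using congrFun h 0
    · funext j
      simp [Matrix.vecMul, dotProduct, Fin.sum_univ_succ, M, hvdef]
  rw [Matrix.det_succ_row_zero] at hM
  have hsgn (j : Fin (k + 1)) : 0 < v (I 0) * ((-1) ^ (j : ℕ) * v (I j)) := by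
    induction j using Fin.induction with
    | zero =>
      have := hv ⟨0, by omega⟩
      have h0 : v (I 0) ≠ 0 := left_ne_zero_of_mul this.ne
      simpa using mul_self_pos.2 h0
    | succ j ih =>
      have := mul_pos_of_neg_of_neg (hv j) (neg_neg_of_pos ih)
      simp only [Fin.val_castSucc, Fin.val_succ, pow_succ] at *
      have h2 : 0 < (v (I j.castSucc) * v (I j.castSucc)) *
        (v (I 0) * ((-1) ^ (j : ℕ) * -1 * v (I j.succ))) := by linarith
      exact pos_of_mul_pos_right h2 (mul_self_nonneg _)
  have hpos : 0 < ∑ j : Fin (k + 1), v (I 0) *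
      ((-1) ^ (j : ℕ) * M 0 j * (M.submatrix Fin.succ j.succAbove).det) := by
    refine Finset.sum_pos (fun j _ => ?_) Finset.univ_nonempty
    have h1 := hC (I ∘ j.succAbove) (hI.comp (Fin.strictMono_succAbove j))
    have h2 : M.submatrix Fin.succ j.succAbove = C.submatrix id (I ∘ j.succAbove) := by
      ext a b; simp [M]
    rw [h2, ← mul_assoc]
    exact mul_pos (by simpa [M] using hsgn j) h1
  rw [← Finset.mul_sum, hM, mul_zero] at hpos
  exact hpos.false

/-- The same bound when the maximal minors are only nonnegative and not all zero. The induction is on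
the number of vanishing minors: if some but not all vanish, then adding a small positive multiple of
a column to a neighbouring one decreases no minor, makes at least one more minor positive,
and is too small to affect the strict signs of the vector. -/
theorem not_alternating_of_minors_nonneg {k n : ℕ} (hk : k ≠ 0)
    (C : Matrix (Fin k) (Fin n) ℝ) (c : Fin k → ℝ)
    (I : Fin (k + 1) → Fin n) (hI : StrictMono I)
    (hv : ∀ a : Fin k, Matrix.vecMul c C (I a.castSucc) * Matrix.vecMul c C (I a.succ) < 0)
    (hC : ∀ g : Fin k → Fin n, StrictMono g → 0 ≤ (C.submatrix id g).det)
    (hC0 : ∃ g : Fin k → Fin n, StrictMono g ∧ 0 < (C.submatrix id g).det) : False := by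
  classical
  induction hN : (Finset.univ.filter fun g : Fin k → Fin n =>
      StrictMono g ∧ (C.submatrix id g).det = 0).card using Nat.strong_induction_on
      generalizing C with
  | _ N ih =>
  subst hN
  obtain ⟨g₀, hg₀, hg₀C⟩ := hC0
  refine not_alternating_of_minors_pos hk C c I hI hv fun h hh => ?_
  refine forall_strictMono_of_adjacent_moves (fun g => 0 < (C.submatrix id g).det) ?_ g₀ h hg₀ hh hg₀C
  intro g hg hgC a j hj hgj
  by_contra hneg
  have hzero := le_antisymm (not_lt.1 hneg) (hC _ hgj)
  have hij : g a ≠ j := fun h => by rw [h] at hj; omega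
  have hja : ∀ b, g b ≠ j := by
    intro b hb
    by_cases hba : b = a
    · exact hij (hba ▸ hb)
    · exact hba (hgj.injective (by simp [hba, hb]))
  set i := g a with hi
  set v := Matrix.vecMul c C with hvdef
  -- `t` is small enough that adding `t` times entry `i` does not change the sign of entry `j`.
  obtain ⟨t, ht, htv⟩ : ∃ t : ℝ, 0 < t ∧ (v j ≠ 0 → 0 < v j * (v j + t * v i)) := by
    by_cases h0 : v j = 0
    · exact ⟨1, one_pos, fun h => absurd h0 h⟩
    · have hp := mul_self_pos.2 h0
      refine ⟨v j * v j / (|v j * v i| + 1), by positivity, fun _ => ?_⟩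
      have hq : 0 < |v j * v i| + 1 := by positivity
      have : v j * (v j + v j * v j / (|v j * v i| + 1) * v i) =
        (v j * v j) * ((|v j * v i| + 1 + v j * v i) / (|v j * v i| + 1)) := by
        field_simp
      rw [this]
      exact mul_pos hp (div_pos (by linarith [neg_abs_le (v j * v i)]) hq)
  let C' := C.updateCol j ((fun r => C r j) + t • fun r => C r i)
  have hdet (f : Fin k → Fin n) (hf : StrictMono f) :
      (∀ b, f b ≠ j) ∧ (C'.submatrix id f).det = (C.submatrix id f).det ∨
      ∃ b, f b = j ∧ (C'.submatrix id f).det =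
        (C.submatrix id f).det + t * (C.submatrix id (Function.update f b i)).det := by
    by_cases hfj : ∃ b, f b = j
    · right
      obtain ⟨b, hb⟩ := hfj
      refine ⟨b, hb, ?_⟩
      have e : C'.submatrix id f = (C.submatrix id f).updateCol b
          ((fun r => C r j) + t • fun r => C r i) := by
        ext r x
        by_cases hx : x = b
        · subst hx; simp [C', hb]
        · have : f x ≠ j := fun h => hx (hf.injective (h.trans hb.symm))
          simp [C', hx, this]
      rw [e, Matrix.det_updateCol_add, Matrix.det_updateCol_smul]
      congr 3
      · ext r x
        by_cases hx : x = b
        · subst hx; simp [hb]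
        · simp [hx]
      · ext r x
        by_cases hx : x = b
        · subst hx; simp
        · simp [hx]
    · left
      push Not at hfj
      refine ⟨hfj, ?_⟩
      congr 1
      ext r x
      simp [C', hfj]
  have hge (f : Fin k → Fin n) (hf : StrictMono f) :
      (C.submatrix id f).det ≤ (C'.submatrix id f).det := by
    rcases hdet f hf with ⟨-, h⟩ | ⟨b, hb, h⟩
    · exact h.ge
    · rw [h]
      refine le_add_of_nonneg_right (mul_nonneg ht.le ?_)
      by_cases hfi : ∃ b', f b' = i
      · obtain ⟨b', hb'⟩ := hfi
        have hne : b' ≠ b := by rintro rfl; exact hij (hb'.symm.trans hb)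
        refine (Matrix.det_zero_of_column_eq hne fun r => ?_).ge
        simp [hne, hb']
      · push Not at hfi
        -- `i` and `j` are adjacent, so no entry of `f` separates them
        refine hC _ fun x y hxy => ?_
        have h1 := hf hxy
        have h2 := hfi x
        have h3 := hfi y
        by_cases hx : x = b
        · subst hx
          have hy : y ≠ x := hxy.ne'
          simp only [Function.update_self, Function.update_of_ne hy, Fin.lt_def, Fin.ext_iff,
            ne_eq] at *
          omega
        · by_cases hy : y = b
          · subst hy
            simp only [Function.update_self, Function.update_of_ne hx, Fin.lt_def, Fin.ext_iff,
              ne_eq] at *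
            omega
          · simpa [hx, hy] using h1
  have hgj' : 0 < (C'.submatrix id (Function.update g a j)).det := by
    rcases hdet _ hgj with ⟨h, -⟩ | ⟨b, hb, h⟩
    · exact absurd (by simp) (h a)
    · have hba : b = a := by
        by_contra hne
        rw [Function.update_of_ne hne] at hb
        exact hja b hb
      subst hba
      rw [h, hzero, zero_add, Function.update_idem, hi, Function.update_eq_self]
      exact mul_pos ht hgC
  refine ih _ (Finset.card_lt_card ?_) C' ?_ (fun f hf => (hC f hf).trans (hge f hf))
    ⟨g₀, hg₀, hg₀C.trans_le (hge _ hg₀)⟩ rfl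
  · refine Finset.ssubset_iff_of_subset (fun f hf => ?_) |>.2
      ⟨Function.update g a j, by simpa using ⟨hgj, hzero⟩, by simpa using fun _ => hgj'.ne'⟩
    simp only [Finset.mem_filter, Finset.mem_univ, true_and] at hf ⊢
    exact ⟨hf.1, le_antisymm ((hge f hf.1).trans hf.2.le) (hC f hf.1)⟩
  · intro x
    refine mul_neg_of_same_sign (v := v) (ρ := id) (fun l hl => ?_) (hv x)
    by_cases hlj : l = j
    · subst hlj
      have : Matrix.vecMul c C' l = v l + t * v i := by
        simp [Matrix.vecMul, dotProduct, C', hvdef, mul_add, Finset.sum_add_distrib,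
          Finset.mul_sum, mul_left_comm]
      simpa [this] using htv hl
    · have : Matrix.vecMul c C' l = v l := by
        simp [Matrix.vecMul, dotProduct, C', hvdef, hlj]
      simpa [this] using mul_self_pos.2 hl

theorem exists_strictMono_minor_ne_zero {k n : ℕ} (C : Matrix (Fin k) (Fin n) ℝ)
    (h : C.rank = k) :
    ∃ g : Fin k → Fin n, StrictMono g ∧ (C.submatrix id g).det ≠ 0 := by
  classical
  obtain ⟨κ, p, hp, hspan, hli⟩ := exists_linearIndependent' ℝ C.col
  have : Finite κ := Finite.of_injective p hp
  have := Fintype.ofFinite κ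
  have hcard : (Finset.univ.image p).card = k := by
    rw [Finset.card_image_of_injective _ hp, Finset.card_univ,
      linearIndependent_iff_card_eq_finrank_span.1 hli, Set.finrank, hspan,
      ← Matrix.rank_eq_finrank_span_cols, h]
  let g := (Finset.univ.image p).orderEmbOfFin hcard
  have hg (a : Fin k) : ∃ x, p x = g a := by
    obtain ⟨x, -, hx⟩ := Finset.mem_image.1 (Finset.orderEmbOfFin_mem _ hcard a)
    exact ⟨x, hx⟩
  choose q hq using hg
  have hqinj : Function.Injective q := fun a b hab =>
    g.injective (by rw [← hq a, ← hq b, hab])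
  refine ⟨g, g.strictMono, ?_⟩
  have hcol : (C.submatrix id g).col = (C.col ∘ p) ∘ q := by
    funext a r
    simp [hq]
  have hu : IsUnit (C.submatrix id g) :=
    Matrix.linearIndependent_cols_iff_isUnit.1 (hcol ▸ hli.comp q hqinj)
  exact ((Matrix.isUnit_iff_isUnit_det _).1 hu).ne_zero

theorem amplituhedron_map_full_rank (n k m : ℕ) (hn : k + m ≤ n)
    (C : Matrix (Fin k) (Fin n) ℝ)
    (hCrank : C.rank = k)
    (hC : ∀ g : Fin k → Fin n, StrictMono g → 0 ≤ (C.submatrix id g).det)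
    (Z : Matrix (Fin n) (Fin (k + m)) ℝ)
    (hZ : ∀ f : Fin (k + m) → Fin n, StrictMono f → 0 < (Z.submatrix f id).det) :
    (C * Z).rank = k := by
  obtain ⟨g, hg, hgC⟩ := exists_strictMono_minor_ne_zero C hCrank
  suffices h : LinearIndependent ℝ (C * Z).row by simpa using h.rank_matrix
  rw [← Matrix.vecMul_injective_iff]
  refine (injective_iff_map_eq_zero (Matrix.vecMulLinear (C * Z))).2 fun c hc => ?_
  rw [Matrix.vecMulLinear_apply, ← Matrix.vecMul_vecMul] at hc
  by_contra hc0
  have hv : Matrix.vecMul c C ≠ 0 := fun h =>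
    hgC <| Matrix.exists_vecMul_eq_zero_iff.1 ⟨c, hc0, funext fun a => congrFun h (g a)⟩
  obtain ⟨I, hI, hIv⟩ := alternating_of_vecMul_eq_zero (k + m) n hn Z hZ _ hv hc
  have hk : k ≠ 0 := by
    rintro rfl
    exact hc0 (Subsingleton.elim _ _)
  exact not_alternating_of_minors_nonneg hk C c (I ∘ Fin.castLE (by omega)) (hI.comp (Fin.strictMono_castLE _))
    (fun a => hIv (Fin.castLE (by omega) a)) hC ⟨g, hg, (hC g hg).lt_of_ne' hgC⟩
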